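/- Let V be a congruence modular variety, with Gumm terms d₁,…,dₙ,q. Define terms q₂(x,y,z) := q(x,y,z) and q_{m+1}(x,y,z) := q(x,q_m(x,y,y),q_m(x,y,z)) for m ≥ 2. Then for each m ≥ 2, q_m is an m-difference term for V: q_m(x,x,z) = z holds identically in V, and for all a,b in any A ∈ V, q_m(a,b,b) is congruent to a modulo [θ,…,θ]_m, where θ is the congruence of A generated by (a,b). -/

import Mathlib

set_option autoImplicit false

namespace UA

/-- A signature: a type of operation symbols, each with a finite arity. -/
structure Signature : Type 1 where
  ops : Type
  arity : ops → ℕ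

/-- An algebra for a signature: a carrier set together with an interpretation
of every operation symbol. -/
structure Algebra (σ : Signature) : Type 1 where
  carrier : Type
  interp : (o : σ.ops) → (Fin (σ.arity o) → carrier) → carrier

variable {σ : Signature}

/-- A congruence of an algebra: an equivalence relation compatible with all
basic operations. -/
structure Con (A : Algebra σ) : Type where
  r : A.carrier → A.carrier → Prop
  refl : ∀ a, r a a
  symm : ∀ {a b}, r a b → r b a
  trans : ∀ {a b c}, r a b → r b c → r a c
  compat : ∀ (o : σ.ops) (x y : Fin (σ.arity o) → A.carrier),
      (∀ i, r (x i) (y i)) → r (A.interp o x) (A.interp o y)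

namespace Con

variable {A : Algebra σ}

instance : LE (Con A) := ⟨fun c d => ∀ a b : A.carrier, c.r a b → d.r a b⟩
instance : LT (Con A) := ⟨fun c d => c ≤ d ∧ ¬ d ≤ c⟩

/-- The total congruence `1_A`. -/
def top : Con A where
  r := fun _ _ => True
  refl := fun _ => trivial
  symm := fun _ => trivial
  trans := fun _ _ => trivial
  compat := fun _ _ _ _ => trivial

/-- The identity congruence `0_A`. -/
def bot : Con A where
  r := fun a b => a = b
  refl := fun _ => rfl
  symm := fun h => h.symm
  trans := fun h h' => h.trans h'
  compat := fun o _ _ h => congrArg (A.interp o) (funext h)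

/-- Meet of an arbitrary family of congruences (intersection). -/
def sInf (S : Set (Con A)) : Con A where
  r a b := ∀ c ∈ S, c.r a b
  refl a c _ := c.refl a
  symm h c hc := c.symm (h c hc)
  trans h h' c hc := c.trans (h c hc) (h' c hc)
  compat o x y h c hc := c.compat o x y (fun i => h i c hc)

/-- Binary meet of congruences. -/
def inf (c d : Con A) : Con A where
  r a b := c.r a b ∧ d.r a b
  refl a := ⟨c.refl a, d.refl a⟩
  symm h := ⟨c.symm h.1, d.symm h.2⟩
  trans h h' := ⟨c.trans h.1 h'.1, d.trans h.2 h'.2⟩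
  compat o x y h := ⟨c.compat o x y fun i => (h i).1, d.compat o x y fun i => (h i).2⟩

/-- The congruence generated by a set of pairs. -/
def conGen (S : Set (A.carrier × A.carrier)) : Con A :=
  sInf {c : Con A | ∀ p ∈ S, c.r p.1 p.2}

/-- Binary join of congruences. -/
def sup (c d : Con A) : Con A := conGen {p | c.r p.1 p.2 ∨ d.r p.1 p.2}

/-- Join of a family of congruences. -/
def iSup {I : Type} (f : I → Con A) : Con A := conGen {p | ∃ i, (f i).r p.1 p.2}

/-- Composition of congruences as binary relations. -/
def comp (c d : Con A) (a b : A.carrier) : Prop := ∃ x, c.r a x ∧ d.r x b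

/-- `d` covers `c` in the congruence lattice. -/
def Covers (c d : Con A) : Prop := c < d ∧ ∀ e : Con A, c < e → e ≤ d → e = d

theorem le_sup_right {c d : Con A} : d ≤ sup c d :=
  fun a b h e he => he (a, b) (Or.inr h)

def toSetoid (c : Con A) : Setoid A.carrier := ⟨c.r, ⟨c.refl, c.symm, c.trans⟩⟩

end Con

/-- The quotient algebra `A/γ`. -/
noncomputable def quotAlg (A : Algebra σ) (γ : Con A) : Algebra σ where
  carrier := Quotient γ.toSetoid
  interp o x := Quotient.mk γ.toSetoid (A.interp o (fun i => (x i).out))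

/-- The quotient congruence `α/γ` for `γ ≤ α`. -/
noncomputable def Con.quot {A : Algebra σ} (α γ : Con A) (h : γ ≤ α) : Con (quotAlg A γ) where
  r x y := Quotient.liftOn₂ x y (fun a b => α.r a b)
    (fun a b a' b' ha hb => propext
      ⟨fun hr => α.trans (α.symm (h _ _ ha)) (α.trans hr (h _ _ hb)),
       fun hr => α.trans (h _ _ ha) (α.trans hr (α.symm (h _ _ hb)))⟩)
  refl x := Quotient.inductionOn x fun a => α.refl a
  symm {x y} h' := Quotient.inductionOn₂ x y (fun _ _ hab => α.symm hab) h'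
  trans {x y z} h1 h2 :=
    Quotient.inductionOn₃ x y z (fun _ _ _ hab hbc => α.trans hab hbc) h1 h2
  compat o x y hxy := by
    show α.r (A.interp o fun i => (x i).out) (A.interp o fun i => (y i).out)
    refine α.compat o _ _ fun i => ?_
    have h1 := hxy i
    rw [← Quotient.out_eq (x i), ← Quotient.out_eq (y i)] at h1
    exact h1

/-- The polynomial operations of an algebra: the clone generated by the basic
operations, the projections and the constants. -/
inductive IsPolynomial (A : Algebra σ) : {n : ℕ} → ((Fin n → A.carrier) → A.carrier) → Prop
  | proj {n : ℕ} (i : Fin n) : IsPolynomial A (fun x => x i)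
  | const {n : ℕ} (a : A.carrier) : IsPolynomial A (fun _ : Fin n → A.carrier => a)
  | app {n : ℕ} (o : σ.ops) (g : Fin (σ.arity o) → (Fin n → A.carrier) → A.carrier) :
      (∀ j, IsPolynomial A (g j)) → IsPolynomial A (fun x => A.interp o (fun j => g j x))

/-- Substituting, coordinatewise according to the grouping `g` and the choice
vector `ε`, the entries of `b` (where `ε` is `true`) or of `a` (where `ε` is `false`). -/
def chooseVec {β : Type} {N n : ℕ} (g : Fin N → Fin n) (a b : Fin N → β)
    (ε : Fin n → Bool) : Fin N → β :=
  fun i => if ε (g i) then b i else a i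

/-- The higher centralizer relation `C(α₁,…,αₙ,β;δ)` of Bulatov.  Polynomials with
grouped variables are modelled by a polynomial `p` of arity `N` together with a
grouping map `g : Fin N → Fin (n+1)`; the group `Fin.last n` is the `β`-group. -/
def Centralizes {A : Algebra σ} {n : ℕ} (α : Fin n → Con A) (β δ : Con A) : Prop :=
  ∀ (N : ℕ) (p : (Fin N → A.carrier) → A.carrier), IsPolynomial A p →
    ∀ (g : Fin N → Fin (n + 1)) (a b : Fin N → A.carrier),
      (∀ i, (Fin.lastCases (motive := fun _ => Con A) β α (g i)).r (a i) (b i)) →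
      (∀ ε : Fin n → Bool, ε ≠ (fun _ => true) →
        δ.r (p (chooseVec g a b (Fin.lastCases (motive := fun _ => Bool) false ε)))
            (p (chooseVec g a b (Fin.lastCases (motive := fun _ => Bool) true ε)))) →
      δ.r (p (chooseVec g a b (Fin.lastCases (motive := fun _ => Bool) false fun _ => true)))
          (p (chooseVec g a b (Fin.lastCases (motive := fun _ => Bool) true fun _ => true)))

/-- The higher commutator `[α₁,…,αₙ,β]`: the smallest congruence `δ` such that
`C(α₁,…,αₙ,β;δ)` holds. -/
def commutator {A : Algebra σ} {n : ℕ} (α : Fin n → Con A) (β : Con A) : Con A :=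
  Con.sInf {δ : Con A | Centralizes α β δ}

/-- The higher commutator of a nonempty list of congruences, with the convention
`[α] = α` for a single congruence. -/
def commList {A : Algebra σ} : {n : ℕ} → (Fin (n + 1) → Con A) → Con A
  | 0, γ => γ 0
  | (n+1), γ => commutator (fun j : Fin (n+1) => γ j.castSucc) (γ (Fin.last (n+1)))

/-- The `m`-fold commutator `[θ,…,θ]_m` (for `m ≥ 1`). -/
def nfold {A : Algebra σ} (θ : Con A) (m : ℕ) : Con A :=
  commList (fun _ : Fin (m - 1 + 1) => θ)

/-- The binary commutator `[c,d]`. -/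
def binComm {A : Algebra σ} (c d : Con A) : Con A := commutator (fun _ : Fin 1 => c) d

/-- The lower central series `(θ]ⁿ`. -/
def lcs {A : Algebra σ} (θ : Con A) : ℕ → Con A
  | 0 => θ
  | (k+1) => binComm θ (lcs θ k)

/-- The derived series `[θ]ⁿ`. -/
def derived {A : Algebra σ} (θ : Con A) : ℕ → Con A
  | 0 => θ
  | (k+1) => binComm (derived θ k) (derived θ k)

/-- An algebra is nilpotent if some term of the lower central series of `1_A` is `0_A`. -/
def Nilpotent (A : Algebra σ) : Prop := ∃ m, lcs (Con.top : Con A) m = Con.bot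

/-- An algebra is nilpotent of class `n` if `(1_A]ⁿ = 0_A`. -/
def NilpotentOfClass (A : Algebra σ) (n : ℕ) : Prop := lcs (Con.top : Con A) n = Con.bot

/-- A congruence is solvable if some term of its derived series is `0_A`. -/
def SolvableCon {A : Algebra σ} (θ : Con A) : Prop := ∃ m, derived θ m = Con.bot

/-- `A` is `n`-supernilpotent if `[1_A,…,1_A]_n = 0_A`. -/
def Supernilpotent (A : Algebra σ) (n : ℕ) : Prop := nfold (Con.top : Con A) n = Con.bot

/-- A polynomial `f` absorbs the tuple `a` to the element `c`. -/
def Absorbs (A : Algebra σ) {k : ℕ} (f : (Fin k → A.carrier) → A.carrier)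
    (a : Fin k → A.carrier) (c : A.carrier) : Prop :=
  ∀ b : Fin k → A.carrier, (∃ i, b i = a i) → f b = c

/-- Terms over a signature with variables in `X`. -/
inductive Term (σ : Signature) (X : Type) : Type
  | var : X → Term σ X
  | app : (o : σ.ops) → (Fin (σ.arity o) → Term σ X) → Term σ X

/-- Evaluation of a term in an algebra under an assignment of the variables. -/
def Term.eval {X : Type} (A : Algebra σ) (v : X → A.carrier) : Term σ X → A.carrier
  | Term.var x => v x
  | Term.app o t => A.interp o fun i => Term.eval A v (t i)

/-- Substitution of terms into a term. -/
def Term.subst {X Y : Type} : Term σ X → (X → Term σ Y) → Term σ Y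
  | Term.var x, s => s x
  | Term.app o t, s => Term.app o fun i => Term.subst (t i) s

/-- `A` possesses a Mal'cev term. -/
def HasMalcevTerm (A : Algebra σ) : Prop :=
  ∃ t : Term σ (Fin 3), ∀ a b : A.carrier,
    t.eval A ![a, b, b] = a ∧ t.eval A ![b, b, a] = a

/-- A class of algebras is a variety when it is the class of all models of a set
of identities. -/
def IsVariety (V : Algebra σ → Prop) : Prop :=
  ∃ E : Set (Term σ ℕ × Term σ ℕ),
    ∀ A : Algebra σ, V A ↔ ∀ e ∈ E, ∀ v : ℕ → A.carrier, e.1.eval A v = e.2.eval A v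

/-- Two terms are `V`-equivalent when they evaluate equally in every member of `V`. -/
def vSetoid (V : Algebra σ → Prop) (X : Type) : Setoid (Term σ X) where
  r t s := ∀ A : Algebra σ, V A → ∀ v : X → A.carrier, t.eval A v = s.eval A v
  iseqv := ⟨fun _ _ _ _ => rfl, fun h A hA v => (h A hA v).symm,
    fun h h' A hA v => (h A hA v).trans (h' A hA v)⟩

/-- The `V`-free algebra on the set `X` of generators. -/
noncomputable def freeAlg (V : Algebra σ → Prop) (X : Type) : Algebra σ where
  carrier := Quotient (vSetoid V X)
  interp o x := Quotient.mk (vSetoid V X) (Term.app o fun i => (x i).out)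

/-- The principal congruence `θ(a,b)` generated by the pair `(a,b)`. -/
def conPair (A : Algebra σ) (a b : A.carrier) : Con A := Con.conGen {(a, b)}

/-- A weak difference term for the class `V`. -/
def IsWeakDiffTerm (V : Algebra σ → Prop) (c : Term σ (Fin 3)) : Prop :=
  ∀ A : Algebra σ, V A → ∀ a b : A.carrier,
    (binComm (conPair A a b) (conPair A a b)).r (c.eval A ![a, b, b]) a ∧
    (binComm (conPair A a b) (conPair A a b)).r a (c.eval A ![b, b, a])

/-- A weak `n`-difference term for the class `V`. -/
def IsWeakNDiffTerm (V : Algebra σ → Prop) (n : ℕ) (c : Term σ (Fin 3)) : Prop :=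
  ∀ A : Algebra σ, V A → ∀ a b : A.carrier,
    (nfold (conPair A a b) n).r (c.eval A ![a, b, b]) a ∧
    (nfold (conPair A a b) n).r a (c.eval A ![b, b, a])

/-- Order-preserving maps on the congruence lattice. -/
def MonotoneCon {A : Algebra σ} (F : Con A → Con A) : Prop :=
  ∀ c d : Con A, c ≤ d → F c ≤ F d

/-- `p` is a weak `f`-term of `A` with respect to the interpretation `F`. -/
def IsWeakFTerm (A : Algebra σ) (F : Con A → Con A) (p : Term σ (Fin 3)) : Prop :=
  ∀ (θ : Con A) (a b : A.carrier), θ.r a b →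
    (F θ).r (p.eval A ![a, b, b]) a ∧ (F θ).r a (p.eval A ![b, b, a])

/-- `p` is a weak `f`-term for the class `V`. -/
def HasWeakFTermVariety (V : Algebra σ → Prop) (p : Term σ (Fin 3)) : Prop :=
  ∀ A : Algebra σ, V A → ∃ F : Con A → Con A, MonotoneCon F ∧ IsWeakFTerm A F p

/-- The set `T^θ_{n,f}(θ₁,…,θₙ)` of pairs coming from polynomials which
`f(θ)`-absorb on the cube `{ā₁,b̄₁}×⋯×{āₙ,b̄ₙ}`. -/
def TSet (A : Algebra σ) (F : Con A → Con A) (θ : Con A) {n : ℕ} (θs : Fin n → Con A) :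
    Set (A.carrier × A.carrier) :=
  {pr | ∃ (N : ℕ) (g : (Fin N → A.carrier) → A.carrier), IsPolynomial A g ∧
    ∃ (gr : Fin N → Fin n) (a b : Fin N → A.carrier),
      (∀ i, (θs (gr i)).r (a i) (b i)) ∧
      (∀ ε : Fin n → Bool, (∃ j, ε j = false) →
        (F θ).r (g (fun i => if ε (gr i) then b i else a i)) (g a)) ∧
      pr = (g b, g a)}

/-- Homomorphisms of algebras. -/
def IsHom (A B : Algebra σ) (h : A.carrier → B.carrier) : Prop :=
  ∀ (o : σ.ops) (x : Fin (σ.arity o) → A.carrier),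
    h (A.interp o x) = B.interp o (fun i => h (x i))

/-- The product of a family of algebras. -/
def prodAlg {I : Type} (As : I → Algebra σ) : Algebra σ where
  carrier := ∀ i, (As i).carrier
  interp o x i := (As i).interp o (fun j => x j i)

/-- The subuniverse generated by a subset. -/
inductive Gen (A : Algebra σ) (S : Set A.carrier) : A.carrier → Prop
  | base {a : A.carrier} : a ∈ S → Gen A S a
  | app (o : σ.ops) (x : Fin (σ.arity o) → A.carrier) :
      (∀ i, Gen A S (x i)) → Gen A S (A.interp o x)

/-- `A` possesses a Taylor term. -/
def HasTaylorTerm (A : Algebra σ) : Prop :=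
  ∃ (n : ℕ) (t : Term σ (Fin n)), 1 ≤ n ∧
    (∀ a : A.carrier, t.eval A (fun _ => a) = a) ∧
    ∀ i : Fin n, ∃ u v : Fin n → Bool, u i = true ∧ v i = false ∧
      ∀ x y : A.carrier,
        t.eval A (fun j => if u j then x else y) = t.eval A (fun j => if v j then x else y)

/-- The variety `V` possesses a Taylor term. -/
def VarietyHasTaylorTerm (V : Algebra σ → Prop) : Prop :=
  ∃ (n : ℕ) (t : Term σ (Fin n)), 1 ≤ n ∧
    (∀ A : Algebra σ, V A → ∀ a : A.carrier, t.eval A (fun _ => a) = a) ∧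
    ∀ i : Fin n, ∃ u v : Fin n → Bool, u i = true ∧ v i = false ∧
      ∀ A : Algebra σ, V A → ∀ x y : A.carrier,
        t.eval A (fun j => if u j then x else y) = t.eval A (fun j => if v j then x else y)

/-- `Ξ(θ)`: the smallest set of congruences containing `θ` and closed under
higher commutators (of arity at least 2) of its members. -/
inductive Xi {A : Algebra σ} (θ : Con A) : Con A → Prop
  | base : Xi θ θ
  | comm {k : ℕ} (γ : Fin (k + 2) → Con A) : (∀ j, Xi θ (γ j)) → Xi θ (commList γ)

/-- An expanded loop on the carrier `α` with extra operations indexed by `ι`. -/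
structure ExpLoop (ι : Type) (ar : ι → ℕ) (α : Type) : Type where
  mul : α → α → α
  ldiv : α → α → α
  rdiv : α → α → α
  zero : α
  extra : (i : ι) → (Fin (ar i) → α) → α
  ldiv_mul : ∀ x y, ldiv x (mul x y) = y
  mul_rdiv : ∀ x y, rdiv (mul x y) y = x
  mul_ldiv : ∀ x y, mul x (ldiv x y) = y
  rdiv_mul : ∀ x y, mul (rdiv x y) y = x
  zero_mul : ∀ x, mul zero x = x
  mul_zero : ∀ x, mul x zero = x

/-- Operation symbols of an expanded loop. -/
inductive LoopOp (ι : Type) : Type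
  | mul | ldiv | rdiv | zero
  | extra : ι → LoopOp ι

/-- The signature of an expanded loop. -/
@[reducible] def loopSig (ι : Type) (ar : ι → ℕ) : Signature where
  ops := LoopOp ι
  arity o := match o with
    | .mul => 2
    | .ldiv => 2
    | .rdiv => 2
    | .zero => 0
    | .extra i => ar i

/-- The algebra underlying an expanded loop. -/
def ExpLoop.toAlgebra {ι : Type} {ar : ι → ℕ} {α : Type} (L : ExpLoop ι ar α) :
    Algebra (loopSig ι ar) where
  carrier := α
  interp o := match o with
    | .mul => fun x => L.mul (x 0) (x 1)
    | .ldiv => fun x => L.ldiv (x 0) (x 1)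
    | .rdiv => fun x => L.rdiv (x 0) (x 1)
    | .zero => fun _ => L.zero
    | .extra i => L.extra i

/-- An expanded loop is of `n`-type. -/
def ExpLoop.IsNType {ι : Type} {ar : ι → ℕ} {α : Type} (L : ExpLoop ι ar α) (n : ℕ) : Prop :=
  (∀ p : Σ k : ℕ, (Fin k → α) → α,
      (∃ i : ι, p = ⟨ar i, L.extra i⟩) ↔
        (1 ≤ p.1 ∧ p.1 ≤ n - 1 ∧ IsPolynomial L.toAlgebra p.2 ∧
          Absorbs L.toAlgebra p.2 (fun _ => L.zero) L.zero)) ∧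
  (∀ f : (Fin (n - 1) → α) → α,
      IsPolynomial L.toAlgebra f → Absorbs L.toAlgebra f (fun _ => L.zero) L.zero →
      ∀ (j : Fin (n - 1)) (x : Fin (n - 1) → α) (u v : α),
        f (Function.update x j (L.mul u v)) =
          L.mul (f (Function.update x j u)) (f (Function.update x j v))) ∧
  (∀ k : ℕ, 2 ≤ k → k < n →
      commList (Fin.snoc (fun _ : Fin (n - k) => (Con.top : Con L.toAlgebra))
        (nfold Con.top k)) = Con.bot)

/-- `A` is polynomially equivalent to an `n`-type expanded loop on the same carrier. -/
def PolyEquivNTypeLoop (A : Algebra σ) (n : ℕ) : Prop :=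
  ∃ (ι : Type) (ar : ι → ℕ) (L : ExpLoop ι ar A.carrier),
    L.IsNType n ∧
    ∀ (k : ℕ) (f : (Fin k → A.carrier) → A.carrier),
      IsPolynomial A f ↔ IsPolynomial L.toAlgebra f

/-- Left-associated product of a list with initial value `c`. -/
def lprodFrom {β : Type} (mul : β → β → β) (c : β) (l : List β) : β := List.foldl mul c l

/-- Left-associated product of a list (with a default value for the empty list). -/
def lprodList {β : Type} (mul : β → β → β) (dflt : β) : List β → β
  | [] => dflt
  | a :: l => List.foldl mul a l

/-- Left-associated product of a nonempty tuple. -/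
def lassoc {β : Type} (mul : β → β → β) : {m : ℕ} → (Fin (m + 1) → β) → β
  | 0, y => y 0
  | (m+1), y => mul (lassoc mul (Fin.init y)) (y (Fin.last (m+1)))

/-- `A` has a representation of degree `n`. -/
def HasRepOfDegree (A : Algebra σ) (n : ℕ) : Prop :=
  ∃ (z : A.carrier) (r : (Fin 2 → A.carrier) → A.carrier),
    IsPolynomial A r ∧ (∀ x : A.carrier, r ![z, x] = x) ∧ (∀ x : A.carrier, r ![x, z] = x) ∧
    ∀ (k : ℕ) (f : (Fin k → A.carrier) → A.carrier), IsPolynomial A f →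
      ∃ (c : A.carrier) (R : ℕ → (Fin k → A.carrier) → A.carrier),
        (∀ m : ℕ, 1 ≤ m → m ≤ min k n →
          ∃ (l : List (Finset (Fin k)))
            (t : (S : Finset (Fin k)) → (Fin S.card → A.carrier) → A.carrier),
            l.Nodup ∧
            (∀ S : Finset (Fin k), S ∈ l ↔ S.card = m) ∧
            (∀ S ∈ l, IsPolynomial A (t S) ∧ Absorbs A (t S) (fun _ => z) z) ∧
            (∀ x : Fin k → A.carrier,
              R m x = lprodList (fun u v => r ![u, v]) z
                (l.map (fun S => t S (fun j => x ((S.orderIsoOfFin rfl j).val)))))) ∧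
        ∀ x : Fin k → A.carrier,
          f x = lprodFrom (fun u v => r ![u, v]) c
            ((List.range' 1 (min k n)).map (fun m => R m x))

/-- Products of `0`-absorbing polynomials (of arities between `lo` and `hi`)
in a given set of variables. -/
inductive ProdOfAbs {ι : Type} {ar : ι → ℕ} {α : Type} (L : ExpLoop ι ar α)
    (lo hi : ℕ) {I : Type} : ((I → α) → α) → Prop
  | base {p : ℕ} (h : (Fin p → α) → α) (sel : Fin p → I) :
      lo ≤ p → p ≤ hi → IsPolynomial L.toAlgebra h →
      Absorbs L.toAlgebra h (fun _ => L.zero) L.zero →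
      ProdOfAbs L lo hi (fun v => h (fun j => v (sel j)))
  | mul {F G : (I → α) → α} :
      ProdOfAbs L lo hi F → ProdOfAbs L lo hi G →
      ProdOfAbs L lo hi (fun v => L.mul (F v) (G v))

/-- The terms `q_m` (for `m ≥ 2`, `qSeq q (m-2)` is `q_m`):
`q₂ := q`, `q_{m+1}(x,y,z) := q(x, q_m(x,y,y), q_m(x,y,z))`. -/
def qSeq (q : Term σ (Fin 3)) : ℕ → Term σ (Fin 3)
  | 0 => q
  | (k+1) => q.subst ![Term.var 0, (qSeq q k).subst ![Term.var 0, Term.var 1, Term.var 1], qSeq q k]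

/-!
The pairs that every congruence `δ` with `C(θ,…,θ;δ)` must contain include the top edges of the
cubes spanned by polynomials all of whose other parallel edges are degenerate. If `(c, e)` is such
an edge, `t(x, y, x) = x` holds and `a θ u`, then `(t(a, c, u), t(a, e, u))` is such an edge in one
more dimension, because varying the last argument of `t` from `u` to `a` collapses the new facet.
Hence if `a` is linked to `u` by edges of dimension `n`, then `d_i(a, a, u)` is linked to
`d_i(a, u, u)` by edges of dimension `n + 1`, and walking along the Gumm terms links `a` to
`q(a, u, u)`. Starting from `u = b`, iteration gives `u = q_m(a, b, b)` for all `m`, since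
`q_{m+1}(a, b, b) = q(a, q_m(a, b, b), q_m(a, b, b))`.
-/

section Terms

variable {X Y : Type} {A : Algebra σ}

theorem Term.eval_subst (t : Term σ X) (s : X → Term σ Y) (v : Y → A.carrier) :
    (t.subst s).eval A v = t.eval A fun x => (s x).eval A v := by
  induction t with
  | var x => rfl
  | app o t ih => exact congrArg (A.interp o) (funext ih)

theorem Term.eval_subst_vec3 (t : Term σ (Fin 3)) (s₀ s₁ s₂ : Term σ Y) (v : Y → A.carrier) :
    (t.subst ![s₀, s₁, s₂]).eval A v = t.eval A ![s₀.eval A v, s₁.eval A v, s₂.eval A v] := by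
  rw [Term.eval_subst]
  congr 1
  funext i
  fin_cases i <;> rfl

theorem Term.rel_eval (t : Term σ X) {θ : Con A} {v w : X → A.carrier}
    (hvw : ∀ x, θ.r (v x) (w x)) : θ.r (t.eval A v) (t.eval A w) := by
  induction t with
  | var x => exact hvw x
  | app o t ih => exact θ.compat o _ _ ih

theorem IsPolynomial.comp {k n : ℕ} {p : (Fin k → A.carrier) → A.carrier}
    {f : Fin k → (Fin n → A.carrier) → A.carrier} (hp : IsPolynomial A p)
    (hf : ∀ i, IsPolynomial A (f i)) : IsPolynomial A fun y => p fun i => f i y := by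
  induction hp with
  | proj i => exact hf i
  | const a => exact .const a
  | app o g _ ih => exact .app o _ ih

theorem Term.isPolynomial_eval {n : ℕ} (t : Term σ (Fin n)) :
    IsPolynomial A fun v => t.eval A v := by
  induction t with
  | var i => exact .proj i
  | app o t ih => exact .app o _ ih

theorem Term.isPolynomial_eval_vec3 {n : ℕ} (t : Term σ (Fin 3))
    {f g h : (Fin n → A.carrier) → A.carrier} (hf : IsPolynomial A f) (hg : IsPolynomial A g)
    (hh : IsPolynomial A h) : IsPolynomial A fun y => t.eval A ![f y, g y, h y] := by
  have hcomp := t.isPolynomial_eval.comp (f := ![f, g, h]) fun i => by fin_cases i <;> assumption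
  convert hcomp using 3 with y
  funext i
  fin_cases i <;> rfl

end Terms

section CubeEdges

variable {A : Algebra σ} {n : ℕ}

theorem cons_const {β : Type*} (x : β) :
    (Fin.cons x fun _ => x : Fin (n + 1) → β) = fun _ => x :=
  Fin.cons_self_tail fun _ => x

theorem lastCases_eq_snoc {β : Type*} (s : β) (f : Fin n → β) :
    (fun i => Fin.lastCases (motive := fun _ => β) s f i) = Fin.snoc (α := fun _ => β) f s := by
  funext i
  cases i using Fin.lastCases <;> simp

/-- The vertex of the cube `{a₀, b₀} × ⋯ × {aₙ, bₙ}` with `ε` choosing the first `n` coordinates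
and `s` choosing the last one. -/
def cubeVertex {β : Type} (a b : Fin (n + 1) → β) (ε : Fin n → Bool) (s : Bool) : Fin (n + 1) → β :=
  chooseVec id a b (Fin.snoc (α := fun _ => Bool) ε s)

theorem cubeVertex_cons {β : Type} (a₀ b₀ : β) (a b : Fin (n + 1) → β) (e : Bool)
    (ε : Fin n → Bool) (s : Bool) :
    cubeVertex (Fin.cons a₀ a : Fin (n + 2) → β) (Fin.cons b₀ b) (Fin.cons e ε) s =
      Fin.cons (if e then b₀ else a₀) (cubeVertex a b ε s) := by
  unfold cubeVertex
  rw [← Fin.cons_snoc_eq_snoc_cons]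
  funext i
  cases i using Fin.cases <;> simp [chooseVec]

/-- `(c, e)` is the top edge in the direction `β` of a cube, spanned by a polynomial with one
variable for each of `α₁,…,αₙ,β`, all of whose other edges in the direction `β` are degenerate.
Such pairs lie in every `δ` with `C(α₁,…,αₙ,β;δ)`. -/
def CubeEdge (α : Fin n → Con A) (β : Con A) (c e : A.carrier) : Prop :=
  ∃ (p : (Fin (n + 1) → A.carrier) → A.carrier) (a b : Fin (n + 1) → A.carrier),
    IsPolynomial A p ∧
    (∀ i, (Fin.snoc (α := fun _ => Con A) α β i).r (a i) (b i)) ∧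
    (∀ ε : Fin n → Bool, ε ≠ (fun _ => true) →
      p (cubeVertex a b ε false) = p (cubeVertex a b ε true)) ∧
    p (cubeVertex a b (fun _ => true) false) = c ∧ p (cubeVertex a b (fun _ => true) true) = e

variable {α : Fin n → Con A} {β γ : Con A} {a c e u : A.carrier}

theorem cubeEdge_zero {α : Fin 0 → Con A} (hβ : β.r c e) : CubeEdge α β c e :=
  ⟨fun x => x 0, fun _ => c, fun _ => e, .proj 0, fun i => by rwa [Fin.fin_one_eq_zero i],
    fun _ hε => absurd (Subsingleton.elim _ _) hε, rfl, rfl⟩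

theorem CubeEdge.commutator (h : CubeEdge α β c e) : (commutator α β).r c e := by
  obtain ⟨p, a, b, hp, hab, hdeg, rfl, rfl⟩ := h
  intro δ hδ
  have hcentral := hδ (n + 1) p hp id a b
  simp only [lastCases_eq_snoc] at hcentral
  refine hcentral (fun i => ?_) fun ε hε => ?_
  · exact congrFun (lastCases_eq_snoc β α) i ▸ hab i
  · exact (congrArg (δ.r _) (hdeg ε hε)).mp (δ.refl _)

theorem CubeEdge.cons (h : CubeEdge α β c e) (hγ : γ.r a u) {t : Term σ (Fin 3)} {x : A.carrier}
    (ht : ∀ y z, t.eval A ![x, y, a] = t.eval A ![x, z, a]) :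
    CubeEdge (Fin.cons γ α : Fin (n + 1) → Con A) β (t.eval A ![x, c, u])
      (t.eval A ![x, e, u]) := by
  obtain ⟨p, a', b', hp, hab, hdeg, rfl, rfl⟩ := h
  refine ⟨fun y => t.eval A ![x, p (Fin.tail y), y 0], Fin.cons a a', Fin.cons u b',
    t.isPolynomial_eval_vec3 (.const x) (hp.comp fun i => .proj i.succ) (.proj 0), ?_, ?_, ?_, ?_⟩
  · rw [← Fin.cons_snoc_eq_snoc_cons]
    exact Fin.cases hγ hab
  · intro ε hε
    cases ε using Fin.consCases with | _ e ε =>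
    simp only [cubeVertex_cons, Fin.tail_cons, Fin.cons_zero]
    cases e with
    | false => exact ht _ _
    | true => rw [hdeg ε fun hε' => hε (by rw [hε', cons_const])]
  all_goals simp only [← cons_const true, cubeVertex_cons, Fin.tail_cons, Fin.cons_zero, if_true]

theorem commutator_of_eqvGen_cubeEdge (h : Relation.EqvGen (CubeEdge α β) c e) :
    (commutator α β).r c e :=
  (commutator α β).toSetoid.iseqv.eqvGen_iff.mp (h.mono fun _ _ => CubeEdge.commutator)

theorem eqvGen_cubeEdge_cons (h : Relation.EqvGen (CubeEdge α β) c e) (hγ : γ.r a u)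
    {t : Term σ (Fin 3)} {x : A.carrier}
    (ht : ∀ y z, t.eval A ![x, y, a] = t.eval A ![x, z, a]) :
    Relation.EqvGen (CubeEdge (Fin.cons γ α : Fin (n + 1) → Con A) β) (t.eval A ![x, c, u])
      (t.eval A ![x, e, u]) := by
  induction h with
  | rel _ _ h => exact .rel _ _ (h.cons hγ ht)
  | refl _ => exact .refl _
  | symm _ _ _ ih => exact ih.symm
  | trans _ _ _ _ _ ih₁ ih₂ => exact ih₁.trans _ _ _ ih₂

end CubeEdges

section QSeq

variable {A : Algebra σ} {q : Term σ (Fin 3)}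

theorem eval_qSeq_succ (k : ℕ) (x y z : A.carrier) :
    (qSeq q (k + 1)).eval A ![x, y, z] =
      q.eval A ![x, (qSeq q k).eval A ![x, y, y], (qSeq q k).eval A ![x, y, z]] := by
  simp only [qSeq, Term.eval_subst_vec3]
  rfl

theorem eval_qSeq_left (hq : ∀ x z : A.carrier, q.eval A ![x, x, z] = z) (k : ℕ)
    (x z : A.carrier) : (qSeq q k).eval A ![x, x, z] = z := by
  induction k generalizing z with
  | zero => exact hq x z
  | succ k ih => rw [eval_qSeq_succ, ih, ih, hq]

theorem rel_eval_qSeq (hq : ∀ x z : A.carrier, q.eval A ![x, x, z] = z) (k : ℕ) {θ : Con A}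
    {a b : A.carrier} (hab : θ.r a b) : θ.r a ((qSeq q k).eval A ![a, b, b]) := by
  have hcongr : θ.r ((qSeq q k).eval A ![a, a, a]) ((qSeq q k).eval A ![a, b, b]) :=
    (qSeq q k).rel_eval fun i => by
      fin_cases i
      exacts [θ.refl a, hab, hab]
  rwa [eval_qSeq_left hq] at hcongr

end QSeq

/-- `d₁,…,d_{N+1},q` satisfy in `A` the identities of Gumm terms. The two kinds of links between
consecutive `dᵢ` may come in any order, and `d₁` need only be the first projection on triples
`(x, z, z)`. -/
structure IsGummChain (A : Algebra σ) {N : ℕ} (d : Fin (N + 1) → Term σ (Fin 3))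
    (q : Term σ (Fin 3)) : Prop where
  first : ∀ x z : A.carrier, (d 0).eval A ![x, z, z] = x
  idem : ∀ i (x y : A.carrier), (d i).eval A ![x, y, x] = x
  link : ∀ i : Fin N,
    (∀ x z : A.carrier, (d i.castSucc).eval A ![x, x, z] = (d i.succ).eval A ![x, x, z]) ∨
      ∀ x z : A.carrier, (d i.castSucc).eval A ![x, z, z] = (d i.succ).eval A ![x, z, z]
  last : ∀ x z : A.carrier, (d (Fin.last N)).eval A ![x, z, z] = q.eval A ![x, z, z]
  left : ∀ x z : A.carrier, q.eval A ![x, x, z] = z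

namespace IsGummChain

variable {A : Algebra σ} {N : ℕ} {d : Fin (N + 1) → Term σ (Fin 3)} {q : Term σ (Fin 3)}

theorem eqvGen_cubeEdge_eval (hG : IsGummChain A d q) {n : ℕ} {α : Fin n → Con A} {β γ : Con A}
    {a u : A.carrier} (h : Relation.EqvGen (CubeEdge α β) a u) (hγ : γ.r a u)
    (i : Fin (N + 1)) :
    Relation.EqvGen (CubeEdge (Fin.cons γ α : Fin (n + 1) → Con A) β) a
      ((d i).eval A ![a, u, u]) := by
  have hd (i : Fin (N + 1)) :
      Relation.EqvGen (CubeEdge (Fin.cons γ α : Fin (n + 1) → Con A) β)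
        ((d i).eval A ![a, a, u]) ((d i).eval A ![a, u, u]) :=
    eqvGen_cubeEdge_cons h hγ fun y z => by rw [hG.idem, hG.idem]
  induction i using Fin.induction with
  | zero => exact (hG.first a u).symm ▸ .refl _
  | succ i ih =>
    rcases hG.link i with hxxz | hxzz
    · exact ih.trans _ _ _ ((hd _).symm.trans _ _ _ (hxxz a u ▸ hd _))
    · exact hxzz a u ▸ ih

theorem eqvGen_cubeEdge_qSeq (hG : IsGummChain A d q) {θ : Con A} {a b : A.carrier}
    (hab : θ.r a b) (k : ℕ) :
    Relation.EqvGen (CubeEdge (fun _ : Fin (k + 1) => θ) θ) a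
      ((qSeq q k).eval A ![a, b, b]) := by
  have eqvGen_q {n : ℕ} {u : A.carrier}
      (h : Relation.EqvGen (CubeEdge (fun _ : Fin n => θ) θ) a u) (hu : θ.r a u) :
      Relation.EqvGen (CubeEdge (fun _ : Fin (n + 1) => θ) θ) a (q.eval A ![a, u, u]) := by
    have hlast := hG.eqvGen_cubeEdge_eval h hu (Fin.last N)
    rwa [hG.last, cons_const] at hlast
  induction k with
  | zero => exact eqvGen_q (.rel _ _ (cubeEdge_zero hab)) hab
  | succ k ih =>
    rw [eval_qSeq_succ]
    exact eqvGen_q ih (rel_eval_qSeq hG.left k hab)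

end IsGummChain

theorem nfold_add_two {A : Algebra σ} (θ : Con A) (k : ℕ) :
    nfold θ (k + 2) = commutator (fun _ : Fin (k + 1) => θ) θ :=
  rfl

theorem conPair_rel (A : Algebra σ) (a b : A.carrier) : (conPair A a b).r a b :=
  fun _ hc => hc (a, b) rfl

theorem gumm_terms_give_n_difference_terms_general {A : Algebra σ} {N : ℕ}
    {d : Fin (N + 1) → Term σ (Fin 3)} {q : Term σ (Fin 3)} (hG : IsGummChain A d q)
    {m : ℕ} (hm : 2 ≤ m) :
    (∀ a c : A.carrier, (qSeq q (m - 2)).eval A ![a, a, c] = c) ∧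
      ∀ (θ : Con A) (a b : A.carrier), θ.r a b →
        (nfold θ m).r ((qSeq q (m - 2)).eval A ![a, b, b]) a := by
  obtain ⟨k, rfl⟩ := Nat.exists_eq_add_of_le' hm
  rw [Nat.add_sub_cancel]
  refine ⟨eval_qSeq_left hG.left k, fun θ a b hab => ?_⟩
  rw [nfold_add_two]
  exact commutator_of_eqvGen_cubeEdge (hG.eqvGen_cubeEdge_qSeq hab k).symm

/-- Theorem 4.12 of "On Supernilpotent Algebras": in a congruence modular variety
with Gumm terms `d₁,…,d_N,q` (here `d 0` is `d₁` and `d (Fin.last N)` is `d_N`),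
the terms `q_m` (`qSeq q (m-2)`) are `m`-difference terms: `q_m(x,x,z) = z` holds
identically and `q_m(a,b,b) ≡ a mod [θ(a,b),…,θ(a,b)]_m`. -/
theorem gumm_terms_give_n_difference_terms {σ : Signature} (V : Algebra σ → Prop)
    (hV : IsVariety V)
    (N : ℕ) (d : Fin (N + 1) → Term σ (Fin 3)) (q : Term σ (Fin 3))
    (hd1 : ∀ A : Algebra σ, V A → ∀ v : Fin 3 → A.carrier, (d 0).eval A v = v 0)
    (hd2 : ∀ (i : Fin (N + 1)) (A : Algebra σ), V A → ∀ x y : A.carrier,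
      (d i).eval A ![x, y, x] = x)
    (hdeven : ∀ i : Fin N, (i.val + 1) % 2 = 0 → ∀ A : Algebra σ, V A →
      ∀ x z : A.carrier, (d i.castSucc).eval A ![x, x, z] = (d i.succ).eval A ![x, x, z])
    (hdodd : ∀ i : Fin N, (i.val + 1) % 2 = 1 → ∀ A : Algebra σ, V A →
      ∀ x z : A.carrier, (d i.castSucc).eval A ![x, z, z] = (d i.succ).eval A ![x, z, z])
    (hdq : ∀ A : Algebra σ, V A → ∀ x z : A.carrier,
      (d (Fin.last N)).eval A ![x, z, z] = q.eval A ![x, z, z])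
    (hq : ∀ A : Algebra σ, V A → ∀ x z : A.carrier, q.eval A ![x, x, z] = z) :
    ∀ m : ℕ, 2 ≤ m →
      (∀ A : Algebra σ, V A → ∀ a c : A.carrier, (qSeq q (m - 2)).eval A ![a, a, c] = c) ∧
      (∀ A : Algebra σ, V A → ∀ a b : A.carrier,
        (nfold (conPair A a b) m).r ((qSeq q (m - 2)).eval A ![a, b, b]) a) := by
  have hG (A : Algebra σ) (hA : V A) : IsGummChain A d q :=
    { first := fun x z => hd1 A hA ![x, z, z]
      idem := fun i => hd2 i A hA
      link := fun i => (Nat.mod_two_eq_zero_or_one (i + 1)).imp (hdeven i · A hA) (hdodd i · A hA)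
      last := hdq A hA
      left := hq A hA }
  exact fun m hm =>
    ⟨fun A hA => (gumm_terms_give_n_difference_terms_general (hG A hA) hm).1, fun A hA a b =>
      (gumm_terms_give_n_difference_terms_general (hG A hA) hm).2 _ a b (conPair_rel A a b)⟩

end UA
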